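/- arXiv:1008.1856 — 2 statements merged into one kernel-verified Lean document; each statement's English description precedes it below -/
import Mathlib

section
/- For all 1 ≤ k ≤ n and every x ∈ U ∩ S^n, D_{e_k(x)} e_k(x) = −(1/s_{k−1}(x)) Σ_{r=k−1}^n x_r ∂_r. -/
open scoped InnerProductSpace BigOperators

noncomputable section

/-- `s_j(x) = ∑_{r=j}^n x_r²`. -/
def sfun (n j : ℕ) (x : EuclideanSpace ℝ (Fin (n + 1))) : ℝ :=
  ∑ r : Fin (n + 1), if j ≤ (r : ℕ) then x r ^ 2 else 0

/-- The `j`-th coordinate of `x` (read as a natural-number index, `0` out of range). -/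
def coordfun (n : ℕ) (x : EuclideanSpace ℝ (Fin (n + 1))) (j : ℕ) : ℝ :=
  if h : j < n + 1 then x ⟨j, h⟩ else 0

/-- The vector field `e_j(x) = √(s_j/s_{j-1}) ( −∂_{j−1} + (x_{j−1}/s_j) Σ_{r=j}^n x_r ∂_r )`. -/
def efun (n j : ℕ) (x : EuclideanSpace ℝ (Fin (n + 1))) : EuclideanSpace ℝ (Fin (n + 1)) :=
  WithLp.toLp 2 fun r : Fin (n + 1) => Real.sqrt (sfun n j x / sfun n (j - 1) x) *
    (-(if (r : ℕ) = j - 1 then 1 else 0)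
      + coordfun n x (j - 1) / sfun n j x * (if j ≤ (r : ℕ) then x r else 0))

/-- `U = {x ∈ ℝ^{n+1} : x_n > 0}`. -/
def Usph (n : ℕ) : Set (EuclideanSpace ℝ (Fin (n + 1))) := {x | 0 < coordfun n x n}

/-- The unit sphere `S^n ⊂ ℝ^{n+1}`. -/
def sph (n : ℕ) : Set (EuclideanSpace ℝ (Fin (n + 1))) :=
  {x | ∑ r : Fin (n + 1), x r ^ 2 = 1}

/-!
Let `u = ∂_{k-1}` and let `W` be the span of `∂_k, …, ∂_n`. Writing `p` for the component
of `x` in `W`, `a` for its component along `u` and `y = a u + p`, we have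
`e_k = (a / (‖p‖‖y‖)) p - (‖p‖ / ‖y‖) u`: in the plane of `u` and `p` this is the unit field turning
`y` about the origin. Along a curve with velocity `e_k` the radius `‖y‖` is therefore stationary and
`p` only gets rescaled, so the Leibniz rule needs nothing but the derivatives of `a` and `‖p‖`; what
remains is the centripetal acceleration `-y / ‖y‖²`.
-/

section RotationField

variable {E : Type*} [NormedAddCommGroup E] [InnerProductSpace ℝ E]

lemma hasDerivAt_norm_of_ne_zero {φ : ℝ → E} {φ' : E} {t : ℝ} (hφ : HasDerivAt φ φ' t)
    (h0 : φ t ≠ 0) : HasDerivAt (fun s => ‖φ s‖) (⟪φ t, φ'⟫_ℝ / ‖φ t‖) t := by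
  have h := hφ.norm_sq.sqrt (pow_ne_zero 2 (norm_ne_zero_iff.2 h0))
  simp only [Real.sqrt_sq (norm_nonneg _)] at h
  exact h.congr_deriv (mul_div_mul_left _ _ two_ne_zero)

variable (u : E) (W : Submodule ℝ E) [W.HasOrthogonalProjection]

/-- The orthogonal projection onto `ℝu ⊕ W`, for a unit vector `u` orthogonal to `W`. -/
def lineAddProj : E →L[ℝ] E :=
  (innerSL ℝ u).smulRight u + W.starProjection

lemma lineAddProj_apply (x : E) : lineAddProj u W x = ⟪u, x⟫_ℝ • u + W.starProjection x := rfl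

/-- The unit vector field rotating the plane spanned by `u` and the component of `x` in `W`, where
`u` is a unit vector orthogonal to `W`. It is meaningful where that component is nonzero; the sense
of rotation is from `u` towards `W`, then towards `-u`. -/
def rotationField (x : E) : E :=
  (⟪u, x⟫_ℝ / (‖W.starProjection x‖ * ‖lineAddProj u W x‖)) • W.starProjection x -
    (‖W.starProjection x‖ / ‖lineAddProj u W x‖) • u

variable {u W}

lemma starProjection_lineAddProj (huW : u ∈ Wᗮ) (x : E) :
    W.starProjection (lineAddProj u W x) = W.starProjection x := by
  rw [lineAddProj_apply, map_add, map_smul, W.starProjection_apply_eq_zero_iff.2 huW, smul_zero,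
    zero_add, W.starProjection_eq_self_iff.2 (W.starProjection_apply_mem x)]

lemma lineAddProj_ne_zero (huW : u ∈ Wᗮ) {x : E} (hx : W.starProjection x ≠ 0) :
    lineAddProj u W x ≠ 0 := by
  intro hy
  rw [← starProjection_lineAddProj huW, hy, map_zero] at hx
  exact hx rfl

lemma inner_rotationField (hu : ‖u‖ = 1) (huW : u ∈ Wᗮ) (x : E) :
    ⟪u, rotationField u W x⟫_ℝ = -(‖W.starProjection x‖ / ‖lineAddProj u W x‖) := by
  rw [rotationField, inner_sub_right, real_inner_smul_right, real_inner_smul_right,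
    W.inner_left_of_mem_orthogonal (W.starProjection_apply_mem x) huW,
    real_inner_self_eq_norm_sq, hu]
  ring

lemma starProjection_rotationField (huW : u ∈ Wᗮ) (x : E) :
    W.starProjection (rotationField u W x) =
      (⟪u, x⟫_ℝ / (‖W.starProjection x‖ * ‖lineAddProj u W x‖)) • W.starProjection x := by
  rw [rotationField, map_sub, map_smul, map_smul, W.starProjection_apply_eq_zero_iff.2 huW,
    W.starProjection_eq_self_iff.2 (W.starProjection_apply_mem x), smul_zero, sub_zero]

lemma lineAddProj_rotationField (hu : ‖u‖ = 1) (huW : u ∈ Wᗮ) (x : E) :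
    lineAddProj u W (rotationField u W x) = rotationField u W x := by
  rw [lineAddProj_apply, inner_rotationField hu huW, starProjection_rotationField huW,
    rotationField, neg_smul, neg_add_eq_sub]

lemma inner_lineAddProj_rotationField (hu : ‖u‖ = 1) (huW : u ∈ Wᗮ) (x : E) :
    ⟪lineAddProj u W x, rotationField u W x⟫_ℝ = 0 := by
  have hWu (z : E) : ⟪W.starProjection z, u⟫_ℝ = 0 :=
    W.inner_right_of_mem_orthogonal (W.starProjection_apply_mem z) huW
  rw [lineAddProj_apply, inner_add_left, real_inner_smul_left, inner_rotationField hu huW,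
    rotationField, inner_sub_right, real_inner_smul_right, real_inner_smul_right, hWu,
    real_inner_self_eq_norm_sq]
  field_simp
  ring

lemma differentiableAt_rotationField (huW : u ∈ Wᗮ) {x : E}
    (hx : W.starProjection x ≠ 0) : DifferentiableAt ℝ (rotationField u W) x := by
  have hy := lineAddProj_ne_zero huW hx
  have dp : DifferentiableAt ℝ (fun z => ‖W.starProjection z‖) x :=
    W.starProjection.differentiableAt.norm ℝ hx
  have dy : DifferentiableAt ℝ (fun z => ‖lineAddProj u W z‖) x :=
    (lineAddProj u W).differentiableAt.norm ℝ hy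
  have da : DifferentiableAt ℝ (fun z => ⟪u, z⟫_ℝ) x := (innerSL ℝ u).differentiableAt
  unfold rotationField
  fun_prop (disch := simp [hx, hy])

namespace rotationField

variable {γ : ℝ → E} {t : ℝ}

lemma hasDerivAt_starProjection (huW : u ∈ Wᗮ) (hγ : HasDerivAt γ (rotationField u W (γ t)) t) :
    HasDerivAt (fun s => W.starProjection (γ s))
      ((⟪u, γ t⟫_ℝ / (‖W.starProjection (γ t)‖ * ‖lineAddProj u W (γ t)‖)) •
        W.starProjection (γ t)) t := by
  rw [← starProjection_rotationField huW]
  exact W.starProjection.hasFDerivAt.comp_hasDerivAt t hγ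

lemma hasDerivAt_norm_starProjection (huW : u ∈ Wᗮ) (hp : W.starProjection (γ t) ≠ 0)
    (hγ : HasDerivAt γ (rotationField u W (γ t)) t) :
    HasDerivAt (fun s => ‖W.starProjection (γ s)‖)
      (⟪u, γ t⟫_ℝ / ‖lineAddProj u W (γ t)‖) t := by
  refine (hasDerivAt_norm_of_ne_zero (hasDerivAt_starProjection huW hγ) hp).congr_deriv ?_
  have hp' := norm_ne_zero_iff.2 hp
  rw [real_inner_smul_right, real_inner_self_eq_norm_sq]
  field_simp

lemma hasDerivAt_norm_lineAddProj (hu : ‖u‖ = 1) (huW : u ∈ Wᗮ)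
    (hy : lineAddProj u W (γ t) ≠ 0) (hγ : HasDerivAt γ (rotationField u W (γ t)) t) :
    HasDerivAt (fun s => ‖lineAddProj u W (γ s)‖) 0 t := by
  have dy : HasDerivAt (fun s => lineAddProj u W (γ s)) (rotationField u W (γ t)) t := by
    have h := (lineAddProj u W).hasFDerivAt.comp_hasDerivAt t hγ
    rwa [lineAddProj_rotationField hu huW] at h
  simpa only [inner_lineAddProj_rotationField hu huW, zero_div] using
    hasDerivAt_norm_of_ne_zero dy hy

lemma hasDerivAt_inner (hu : ‖u‖ = 1) (huW : u ∈ Wᗮ)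
    (hγ : HasDerivAt γ (rotationField u W (γ t)) t) :
    HasDerivAt (fun s => ⟪u, γ s⟫_ℝ)
      (-(‖W.starProjection (γ t)‖ / ‖lineAddProj u W (γ t)‖)) t := by
  rw [← inner_rotationField hu huW]
  exact (innerSL ℝ u).hasFDerivAt.comp_hasDerivAt t hγ

lemma hasDerivAt_coeff_axis (hu : ‖u‖ = 1) (huW : u ∈ Wᗮ) (hp : W.starProjection (γ t) ≠ 0)
    (hγ : HasDerivAt γ (rotationField u W (γ t)) t) :
    HasDerivAt (fun s => ‖W.starProjection (γ s)‖ / ‖lineAddProj u W (γ s)‖)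
      (⟪u, γ t⟫_ℝ / ‖lineAddProj u W (γ t)‖ ^ 2) t := by
  have hy := lineAddProj_ne_zero huW hp
  have hy' := norm_ne_zero_iff.2 hy
  refine ((hasDerivAt_norm_starProjection huW hp hγ).fun_div
    (hasDerivAt_norm_lineAddProj hu huW hy hγ) hy').congr_deriv ?_
  field_simp
  ring

lemma hasDerivAt_coeff_starProjection (hu : ‖u‖ = 1) (huW : u ∈ Wᗮ)
    (hp : W.starProjection (γ t) ≠ 0) (hγ : HasDerivAt γ (rotationField u W (γ t)) t) :
    HasDerivAt (fun s => ⟪u, γ s⟫_ℝ / (‖W.starProjection (γ s)‖ * ‖lineAddProj u W (γ s)‖))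
      (-(1 / ‖lineAddProj u W (γ t)‖ ^ 2) -
        (⟪u, γ t⟫_ℝ / (‖W.starProjection (γ t)‖ * ‖lineAddProj u W (γ t)‖)) ^ 2) t := by
  have hy := lineAddProj_ne_zero huW hp
  have hp' := norm_ne_zero_iff.2 hp
  have hy' := norm_ne_zero_iff.2 hy
  refine ((hasDerivAt_inner hu huW hγ).fun_div
    ((hasDerivAt_norm_starProjection huW hp hγ).fun_mul
      (hasDerivAt_norm_lineAddProj hu huW hy hγ)) (mul_ne_zero hp' hy')).congr_deriv ?_
  field_simp
  ring

theorem hasDerivAt_comp (hu : ‖u‖ = 1) (huW : u ∈ Wᗮ)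
    (hp : W.starProjection (γ t) ≠ 0) (hγ : HasDerivAt γ (rotationField u W (γ t)) t) :
    HasDerivAt (fun s => rotationField u W (γ s))
      (-(1 / ‖lineAddProj u W (γ t)‖ ^ 2) • lineAddProj u W (γ t)) t := by
  refine (((hasDerivAt_coeff_starProjection hu huW hp hγ).fun_smul
    (hasDerivAt_starProjection huW hγ)).fun_sub
      ((hasDerivAt_coeff_axis hu huW hp hγ).smul_const u)).congr_deriv ?_
  set r := ‖lineAddProj u W (γ t)‖
  rw [lineAddProj_apply]
  module

end rotationField

theorem fderiv_rotationField_self (hu : ‖u‖ = 1) (huW : u ∈ Wᗮ) {x : E}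
    (hx : W.starProjection x ≠ 0) :
    fderiv ℝ (rotationField u W) x (rotationField u W x) =
      -(1 / ‖lineAddProj u W x‖ ^ 2) • lineAddProj u W x := by
  rw [← (differentiableAt_rotationField huW hx).lineDeriv_eq_fderiv, lineDeriv]
  have hline : HasDerivAt (fun s : ℝ => x + s • rotationField u W x)
      (rotationField u W (x + (0 : ℝ) • rotationField u W x)) 0 := by
    simpa using ((hasDerivAt_id (0 : ℝ)).smul_const (rotationField u W x)).const_add x
  simpa using (rotationField.hasDerivAt_comp hu huW (by simpa using hx) hline).deriv

end RotationField

section CoordinateTail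

/-- The span of `∂_j, …, ∂_n` in `ℝ^{n+1}`, encoded by the vanishing of the coordinates below
`j`. -/
def tailSubspace (n j : ℕ) : Submodule ℝ (EuclideanSpace ℝ (Fin (n + 1))) where
  carrier := {x | ∀ r : Fin (n + 1), (r : ℕ) < j → x r = 0}
  add_mem' hx hy r hr := by simp [hx r hr, hy r hr]
  zero_mem' _ _ := rfl
  smul_mem' c x hx r hr := by simp [hx r hr]

variable {n : ℕ}

lemma starProjection_tailSubspace (j : ℕ) (x : EuclideanSpace ℝ (Fin (n + 1))) :
    (tailSubspace n j).starProjection x =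
      WithLp.toLp 2 fun r : Fin (n + 1) => if j ≤ (r : ℕ) then x r else 0 := by
  refine Submodule.eq_starProjection_of_mem_of_inner_eq_zero
    (fun r hr => if_neg hr.not_ge) fun w hw => ?_
  rw [PiLp.inner_apply]
  refine Finset.sum_eq_zero fun r _ => ?_
  rcases le_or_gt j (r : ℕ) with hr | hr
  · simp [hr]
  · simp [hw r hr]

lemma sfun_eq_norm_sq (j : ℕ) (x : EuclideanSpace ℝ (Fin (n + 1))) :
    sfun n j x = ‖(tailSubspace n j).starProjection x‖ ^ 2 := by
  rw [EuclideanSpace.real_norm_sq_eq, starProjection_tailSubspace, sfun]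
  simp only [ite_pow, ne_eq, OfNat.ofNat_ne_zero, not_false_eq_true, zero_pow]

lemma single_mem_orthogonal_tailSubspace (i : Fin (n + 1)) :
    EuclideanSpace.single i (1 : ℝ) ∈ (tailSubspace n (i + 1))ᗮ := by
  intro w hw
  simpa [EuclideanSpace.inner_single_right] using hw i (Nat.lt_succ_self i)

lemma starProjection_tailSubspace_eq_lineAddProj (i : Fin (n + 1)) :
    (tailSubspace n i).starProjection =
      lineAddProj (EuclideanSpace.single i 1) (tailSubspace n (i + 1)) := by
  ext x r
  rw [lineAddProj_apply, starProjection_tailSubspace, starProjection_tailSubspace]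
  rcases lt_trichotomy r i with h | rfl | h
  · simp [EuclideanSpace.inner_single_left, h.ne, h.not_ge, h.not_gt]
  · simp [EuclideanSpace.inner_single_left]
  · simp [EuclideanSpace.inner_single_left, h, h.ne', h.le]

lemma efun_succ_eq_rotationField (i : Fin (n + 1)) :
    efun n (i + 1) = rotationField (EuclideanSpace.single i 1) (tailSubspace n (i + 1)) := by
  ext x r
  have hsqrt (v w : EuclideanSpace ℝ (Fin (n + 1))) : √(‖v‖ ^ 2 / ‖w‖ ^ 2) = ‖v‖ / ‖w‖ := by
    rw [← div_pow, Real.sqrt_sq (by positivity)]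
  have hcoeff (a ρ τ : ℝ) : ρ / τ * (a / ρ ^ 2) = a / (ρ * τ) := by
    rcases eq_or_ne ρ 0 with rfl | hρ
    · simp
    · field_simp
  have htail : (tailSubspace n (i + 1)).starProjection x r =
      if i + 1 ≤ (r : ℕ) then x r else 0 := by
    rw [starProjection_tailSubspace]
  simp only [rotationField, ← starProjection_tailSubspace_eq_lineAddProj, efun, coordfun,
    Nat.add_sub_cancel, hsqrt, ← hcoeff, htail, sfun_eq_norm_sq, i.is_lt, dite_true, PiLp.sub_apply,
    PiLp.smul_apply, smul_eq_mul, PiLp.single_apply, EuclideanSpace.inner_single_left, map_one,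
    one_mul, Fin.ext_iff]
  ring

lemma sfun_pos {j : ℕ} (hj : j ≤ n) {x : EuclideanSpace ℝ (Fin (n + 1))} (hx : x ∈ Usph n) :
    0 < sfun n j x := by
  have hlast : 0 < x (Fin.last n) := by simpa [Usph, coordfun, Fin.last] using hx
  refine Finset.sum_pos' (fun r _ => by split_ifs <;> positivity)
    ⟨Fin.last n, Finset.mem_univ _, ?_⟩
  rw [if_pos (by simpa using hj)]
  positivity

end CoordinateTail

theorem statement5_general {n : ℕ} (i : Fin (n + 1)) (x : EuclideanSpace ℝ (Fin (n + 1)))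
    (hx : sfun n (i + 1) x ≠ 0) :
    fderiv ℝ (efun n (i + 1)) x (efun n (i + 1) x)
      = (-(1 / sfun n i x)) •
          (WithLp.toLp 2 fun r : Fin (n + 1) => if (i : ℕ) ≤ (r : ℕ) then x r else 0 :
            EuclideanSpace ℝ (Fin (n + 1))) := by
  have htail : (tailSubspace n (i + 1)).starProjection x ≠ 0 := by
    rw [sfun_eq_norm_sq] at hx
    exact norm_ne_zero_iff.1 (pow_ne_zero_iff two_ne_zero |>.1 hx)
  rw [efun_succ_eq_rotationField, fderiv_rotationField_self (by simp)
    (single_mem_orthogonal_tailSubspace i) htail, ← starProjection_tailSubspace_eq_lineAddProj,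
    sfun_eq_norm_sq, starProjection_tailSubspace]

/-- For `1 ≤ k ≤ n` and `x ∈ U ∩ S^n`,
`D_{e_k(x)} e_k(x) = −(1/s_{k−1}(x)) Σ_{r=k−1}^n x_r ∂_r`. -/
theorem statement5 (n k : ℕ) (hk : 1 ≤ k) (hkn : k ≤ n)
    (x : EuclideanSpace ℝ (Fin (n + 1))) (hxU : x ∈ Usph n) (hxS : x ∈ sph n) :
    fderiv ℝ (efun n k) x (efun n k x)
      = (-(1 / sfun n (k - 1) x)) •
          (WithLp.toLp 2 fun r : Fin (n + 1) => if k - 1 ≤ (r : ℕ) then x r else 0 :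
            EuclideanSpace ℝ (Fin (n + 1))) := by
  obtain ⟨j, rfl⟩ := Nat.exists_eq_add_of_le' hk
  exact statement5_general ⟨j, by omega⟩ x (sfun_pos hkn hxU).ne'
end
end

section
/- Let θ : ℝ → ℝ be differentiable, and let B ∈ M₆(ℝ) be the skew-symmetric matrix with B₁₄ = 1/√2, B₁₅ = −1/√2, B₂₃ = −1/2, B₃₂ = 1/2, B₄₁ = −1/√2, B₅₁ = 1/√2 and all other entries 0. Define the curves υ¹(t) = (cos θ(t), 0, 0, −(1/√2) sin θ(t), (1/√2) sin θ(t), 0), υ²(t) = (0, cos(θ(t)/2), sin(θ(t)/2), 0, 0, 0), υ³(t) = (0, −sin(θ(t)/2), cos(θ(t)/2), 0, 0, 0), υ⁴(t) = ((1/√2) sin θ(t), 0, 0, (1 + cos θ(t))/2, (1 − cos θ(t))/2, 0), υ⁵(t) = (−(1/√2) sin θ(t), 0, 0, (1 − cos θ(t))/2, (1 + cos θ(t))/2, 0), υ⁶(t) = (0, 0, 0, 0, 0, 1) in ℝ⁶. Then each υ^λ (λ = 1, …, 6) satisfies the linear differential equation (υ^λ)′(t) = θ′(t) · B υ^λ(t),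 and for every t the six vectors υ¹(t), …, υ⁶(t) form an orthonormal basis of ℝ⁶. -/
open scoped InnerProductSpace

noncomputable section

/-- The skew-symmetric matrix `B ∈ M₆(ℝ)` with `B₁₄ = 1/√2`, `B₁₅ = −1/√2`, `B₂₃ = −1/2`,
`B₃₂ = 1/2`, `B₄₁ = −1/√2`, `B₅₁ = 1/√2` and all other entries `0`. -/
def Bmat : Matrix (Fin 6) (Fin 6) ℝ :=
  !![0, 0, 0, (Real.sqrt 2)⁻¹, -(Real.sqrt 2)⁻¹, 0;
     0, 0, -(1 / 2 : ℝ), 0, 0, 0;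
     0, (1 / 2 : ℝ), 0, 0, 0, 0;
     -(Real.sqrt 2)⁻¹, 0, 0, 0, 0, 0;
     (Real.sqrt 2)⁻¹, 0, 0, 0, 0, 0;
     0, 0, 0, 0, 0, 0]

/-- The coefficient curves `υ¹(t), …, υ⁶(t)` in `ℝ⁶` of the normal parallel frame
`ε₁(t), …, ε₆(t)` along the curve `x(t) ⊂ ι(SE(3)) ⊂ ℝ¹⁶`. -/
def ups (θ : ℝ → ℝ) : Fin 6 → ℝ → EuclideanSpace ℝ (Fin 6) :=
  ![fun t => !₂[Real.cos (θ t), 0, 0,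
      -((Real.sqrt 2)⁻¹ * Real.sin (θ t)), (Real.sqrt 2)⁻¹ * Real.sin (θ t), 0],
    fun t => !₂[0, Real.cos (θ t / 2), Real.sin (θ t / 2), 0, 0, 0],
    fun t => !₂[0, -Real.sin (θ t / 2), Real.cos (θ t / 2), 0, 0, 0],
    fun t => !₂[(Real.sqrt 2)⁻¹ * Real.sin (θ t), 0, 0,
      (1 + Real.cos (θ t)) / 2, (1 - Real.cos (θ t)) / 2, 0],
    fun t => !₂[-((Real.sqrt 2)⁻¹ * Real.sin (θ t)), 0, 0,
      (1 - Real.cos (θ t)) / 2, (1 + Real.cos (θ t)) / 2, 0],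
    fun t => !₂[0, 0, 0, 0, 0, 1]]

/-!
The curves are the orbits of the standard basis under `exp (θ • B)`. Since
`B³ e_l = -ω² • B e_l` with `ω = 1` or `ω = 1/2`, Rodrigues' formula evaluates these orbits in
closed form, and comparing coordinates identifies them with the `υ^l`. The differential equation
is then Rodrigues' formula and the chain rule. Flows of skew operators preserve inner products,
so the six vectors stay orthonormal as the angle moves away from `0`, where they are the standard
basis.
-/

section Rodrigues

variable {E : Type*} [AddCommGroup E] [Module ℝ E]

/-- Rodrigues' formula for the orbit `s ↦ exp (s • A) v` of a vector with
`A³ v = -ω² • A v` and `ω ≠ 0`. -/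
def rodriguesCurve (A : E →ₗ[ℝ] E) (ω : ℝ) (v : E) (s : ℝ) : E :=
  v + (Real.sin (ω * s) / ω) • A v + ((1 - Real.cos (ω * s)) / ω ^ 2) • A (A v)

@[simp]
theorem rodriguesCurve_zero (A : E →ₗ[ℝ] E) (ω : ℝ) (v : E) : rodriguesCurve A ω v 0 = v := by
  simp [rodriguesCurve]

theorem map_rodriguesCurve {A : E →ₗ[ℝ] E} {ω : ℝ} {v : E} (hω : ω ≠ 0)
    (hv : A (A (A v)) = -(ω ^ 2) • A v) (s : ℝ) :
    A (rodriguesCurve A ω v s) =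
      Real.cos (ω * s) • A v + (Real.sin (ω * s) / ω) • A (A v) := by
  simp only [rodriguesCurve, map_add, map_smul, hv]
  match_scalars <;> field_simp
  ring

end Rodrigues

theorem hasDerivAt_rodriguesCurve {E : Type*} [NormedAddCommGroup E] [NormedSpace ℝ E]
    {A : E →ₗ[ℝ] E} {ω : ℝ} {v : E} (hω : ω ≠ 0) (hv : A (A (A v)) = -(ω ^ 2) • A v) (s : ℝ) :
    HasDerivAt (rodriguesCurve A ω v) (A (rodriguesCurve A ω v s)) s := by
  have hmul : HasDerivAt (fun s : ℝ => ω * s) ω s := by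
    simpa using (hasDerivAt_id s).const_mul ω
  have hsin : HasDerivAt (fun s => Real.sin (ω * s) / ω) (Real.cos (ω * s)) s :=
    (hmul.sin.div_const ω).congr_deriv (by field_simp)
  have hcos : HasDerivAt (fun s => (1 - Real.cos (ω * s)) / ω ^ 2) (Real.sin (ω * s) / ω) s :=
    ((hmul.cos.const_sub 1).div_const (ω ^ 2)).congr_deriv (by field_simp)
  rw [map_rodriguesCurve hω hv]
  exact ((hsin.smul_const (A v)).const_add v).add (hcos.smul_const (A (A v)))

section Skew

variable {E : Type*} [NormedAddCommGroup E] [InnerProductSpace ℝ E] {A : ℝ → E →ₗ[ℝ] E}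

theorem inner_eq_inner_of_hasDerivAt_skew
    (hA : ∀ s x y, ⟪A s x, y⟫_ℝ = -⟪x, A s y⟫_ℝ) {u v : ℝ → E}
    (hu : ∀ s, HasDerivAt u (A s (u s)) s) (hv : ∀ s, HasDerivAt v (A s (v s)) s) (s₁ s₂ : ℝ) :
    ⟪u s₁, v s₁⟫_ℝ = ⟪u s₂, v s₂⟫_ℝ := by
  have hderiv (s : ℝ) : HasDerivAt (fun s => ⟪u s, v s⟫_ℝ) 0 s :=
    ((hu s).inner ℝ (hv s)).congr_deriv (by rw [hA]; ring)
  exact is_const_of_deriv_eq_zero (fun s => (hderiv s).differentiableAt)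
    (fun s => (hderiv s).deriv) s₁ s₂

theorem orthonormal_of_hasDerivAt_skew {ι : Type*}
    (hA : ∀ s x y, ⟪A s x, y⟫_ℝ = -⟪x, A s y⟫_ℝ) {u : ι → ℝ → E}
    (hu : ∀ i s, HasDerivAt (u i) (A s (u i s)) s) {s₀ : ℝ}
    (hs₀ : Orthonormal ℝ fun i => u i s₀) (s : ℝ) : Orthonormal ℝ fun i => u i s := by
  classical
  rw [orthonormal_iff_ite] at hs₀ ⊢
  intro i j
  rw [inner_eq_inner_of_hasDerivAt_skew hA (hu i) (hu j) s s₀, hs₀ i j]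

end Skew

theorem inner_toEuclideanLin_of_conjTranspose_eq_neg {𝕜 n : Type*} [RCLike 𝕜] [Fintype n]
    [DecidableEq n] {M : Matrix n n 𝕜} (hM : M.conjTranspose = -M) (x y : EuclideanSpace 𝕜 n) :
    ⟪M.toEuclideanLin x, y⟫_𝕜 = -⟪x, M.toEuclideanLin y⟫_𝕜 := by
  rw [← LinearMap.adjoint_inner_right, ← Matrix.toEuclideanLin_conjTranspose_eq_adjoint, hM,
    map_neg, LinearMap.neg_apply, inner_neg_right]

theorem toEuclideanLin_toEuclideanLin {𝕜 l m n : Type*} [RCLike 𝕜] [Fintype m] [DecidableEq m]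
    [Fintype n] [DecidableEq n] (M : Matrix l m 𝕜) (N : Matrix m n 𝕜) (x : EuclideanSpace 𝕜 n) :
    M.toEuclideanLin (N.toEuclideanLin x) = (M * N).toEuclideanLin x := by
  rw [Matrix.toLpLin_mul 2 2, LinearMap.comp_apply]

theorem Bmat_conjTranspose : Bmat.conjTranspose = -Bmat := by
  ext i j
  fin_cases i <;> fin_cases j <;> simp [Bmat]

theorem Bmat_mul_Bmat :
    Bmat * Bmat =
      !![-1, 0, 0, 0, 0, 0;
         0, -(1 / 4), 0, 0, 0, 0;
         0, 0, -(1 / 4), 0, 0, 0;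
         0, 0, 0, -(1 / 2), 1 / 2, 0;
         0, 0, 0, 1 / 2, -(1 / 2), 0;
         0, 0, 0, 0, 0, 0] := by
  have hsqrt : (√2)⁻¹ * (√2)⁻¹ = (1 / 2 : ℝ) := by
    rw [← mul_inv, Real.mul_self_sqrt zero_le_two, one_div]
  ext i j
  fin_cases i <;> fin_cases j <;>
    simp [Bmat, Matrix.mul_apply, Fin.sum_univ_six, hsqrt] <;> norm_num

/-- The angular velocity at which `υ^l` turns per unit of `θ`. As `υ⁶` is fixed, its value at the
last index is arbitrary apart from being nonzero. -/
def upsFreq : Fin 6 → ℝ := ![1, 1 / 2, 1 / 2, 1, 1, 1]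

theorem upsFreq_ne_zero (l : Fin 6) : upsFreq l ≠ 0 := by
  fin_cases l <;> norm_num [upsFreq]

theorem Bmat_mul_Bmat_mul_Bmat :
    Bmat * Bmat * Bmat = -(Bmat * Matrix.diagonal fun l => upsFreq l ^ 2) := by
  rw [Bmat_mul_Bmat]
  ext i j
  rw [Matrix.neg_apply, Matrix.mul_diagonal]
  fin_cases i <;> fin_cases j <;>
    simp [Bmat, upsFreq, Matrix.mul_apply, Fin.sum_univ_six] <;> ring

theorem toEuclideanLin_Bmat_cube_single (l : Fin 6) :
    Bmat.toEuclideanLin (Bmat.toEuclideanLin (Bmat.toEuclideanLin (EuclideanSpace.single l 1))) =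
      -(upsFreq l ^ 2) • Bmat.toEuclideanLin (EuclideanSpace.single l 1) := by
  ext i
  rw [toEuclideanLin_toEuclideanLin, toEuclideanLin_toEuclideanLin, Bmat_mul_Bmat_mul_Bmat]
  simp [mul_comm]

theorem ups_eq_rodriguesCurve (θ : ℝ → ℝ) (l : Fin 6) (t : ℝ) :
    ups θ l t =
      rodriguesCurve Bmat.toEuclideanLin (upsFreq l) (EuclideanSpace.single l 1) (θ t) := by
  ext i
  simp only [rodriguesCurve, toEuclideanLin_toEuclideanLin, Bmat_mul_Bmat, PiLp.add_apply,
    PiLp.smul_apply]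
  fin_cases l <;> fin_cases i <;> simp [ups, upsFreq, Bmat] <;> ring_nf

theorem hasDerivAt_ups {θ : ℝ → ℝ} {θ' t : ℝ} (hθ : HasDerivAt θ θ' t) (l : Fin 6) :
    HasDerivAt (ups θ l) (θ' • Bmat.toEuclideanLin (ups θ l t)) t := by
  rw [funext (ups_eq_rodriguesCurve θ l)]
  exact (hasDerivAt_rodriguesCurve (upsFreq_ne_zero l)
    (toEuclideanLin_Bmat_cube_single l) (θ t)).scomp t hθ

theorem orthonormal_ups (θ : ℝ → ℝ) (t : ℝ) : Orthonormal ℝ fun l => ups θ l t := by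
  let v (l : Fin 6) : ℝ → EuclideanSpace ℝ (Fin 6) :=
    rodriguesCurve Bmat.toEuclideanLin (upsFreq l) (EuclideanSpace.single l 1)
  have hflow (l : Fin 6) (s : ℝ) : HasDerivAt (v l) (Bmat.toEuclideanLin (v l s)) s :=
    hasDerivAt_rodriguesCurve (upsFreq_ne_zero l) (toEuclideanLin_Bmat_cube_single l) s
  have hskew (_ : ℝ) (x y : EuclideanSpace ℝ (Fin 6)) :
      ⟪Bmat.toEuclideanLin x, y⟫_ℝ = -⟪x, Bmat.toEuclideanLin y⟫_ℝ :=
    inner_toEuclideanLin_of_conjTranspose_eq_neg Bmat_conjTranspose x y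
  have hinit : Orthonormal ℝ fun l => v l 0 := by
    simpa only [v, rodriguesCurve_zero] using EuclideanSpace.orthonormal_single
  simpa only [ups_eq_rodriguesCurve] using orthonormal_of_hasDerivAt_skew hskew hflow hinit (θ t)

/-- Each `υ^λ` satisfies the linear differential equation `(υ^λ)′(t) = θ′(t) · B υ^λ(t)`, and
for every `t` the six vectors `υ¹(t), …, υ⁶(t)` form an orthonormal basis of `ℝ⁶`. -/
theorem statement16 (θ : ℝ → ℝ) (hθ : Differentiable ℝ θ) :
    (∀ (l : Fin 6) (t : ℝ),
      HasDerivAt (ups θ l) (deriv θ t • (WithLp.toLp 2 (Bmat.mulVec (ups θ l t)) : EuclideanSpace ℝ (Fin 6))) t) ∧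
    (∀ t : ℝ, Orthonormal ℝ (fun l : Fin 6 => ups θ l t) ∧
      Submodule.span ℝ (Set.range fun l : Fin 6 => ups θ l t) = ⊤) := by
  refine ⟨fun l t => hasDerivAt_ups (hθ t).hasDerivAt l, fun t => ⟨orthonormal_ups θ t, ?_⟩⟩
  exact (orthonormal_ups θ t).linearIndependent.span_eq_top_of_card_eq_finrank' (by simp)
end
end
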